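/- For smooth functions u : ℝ² → ℝ which are 2π-periodic in each variable, set G(u) = ∫_{[0,2π]×[0,2π]} ( ( ∂_s∂_s u + ∂_t∂_t u )² − 2 (∂_s u)² − 2 (∂_t u)² ). Then G is indefinite: there exist smooth doubly 2π-periodic functions u, v with G(u) > 0 and G(v) < 0. -/

import Mathlib

open MeasureTheory Real

/-- Partial derivative of `u : ℝ² → ℝ` in the first coordinate. -/
noncomputable def pdS (u : ℝ × ℝ → ℝ) (x : ℝ × ℝ) : ℝ := fderiv ℝ u x (1, 0)

/-- Partial derivative of `u : ℝ² → ℝ` in the second coordinate. -/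
noncomputable def pdT (u : ℝ × ℝ → ℝ) (x : ℝ × ℝ) : ℝ := fderiv ℝ u x (0, 1)

/-!
For the Fourier mode `u = sin (m s + n t)` put `λ = m² + n²`. Then `Δu = -λ u`, so the integrand of
`G(u)` is `λ² sin² (m s + n t) - 2 λ cos² (m s + n t)`. If `λ ≠ 0`, both squares have mean `1 / 2`
over a period, whence `G(u) = 2 π² λ (λ - 2)`: it is negative on modes with `λ = 1` and positive on
those with `λ > 2`.
-/

/-- The Fourier mode `sin (m s + n t)` with wave vector `(m, n)`. The components are real because
the formulas for its derivatives need no integrality; the mode is doubly `2π`-periodic when they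
are integers. -/
noncomputable def sinWave (m n : ℝ) (x : ℝ × ℝ) : ℝ := sin (m * x.1 + n * x.2)

/-- The square `[0, 2π]²`, one period cell of a doubly `2π`-periodic function. -/
abbrev periodSquare : Set (ℝ × ℝ) := Set.Icc 0 (2 * π) ×ˢ Set.Icc 0 (2 * π)

/-- The functional `G`: the Hamiltonian second variation of the area of the normal congruence of
a tube, as a quadratic form in the Hamiltonian `u`. -/
noncomputable def tubeSecondVariation (u : ℝ × ℝ → ℝ) : ℝ :=
  ∫ x in periodSquare,
    ((pdS (pdS u) x + pdT (pdT u) x) ^ 2 - 2 * (pdS u x) ^ 2 - 2 * (pdT u x) ^ 2)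

section PartialDerivatives

variable {f : ℝ → ℝ} {f' m n : ℝ} {x : ℝ × ℝ}

lemma hasFDerivAt_comp_linear (hf : HasDerivAt f f' (m * x.1 + n * x.2)) :
    HasFDerivAt (fun y : ℝ × ℝ => f (m * y.1 + n * y.2))
      (f' • (m • ContinuousLinearMap.fst ℝ ℝ ℝ + n • ContinuousLinearMap.snd ℝ ℝ ℝ)) x :=
  hf.comp_hasFDerivAt x ((hasFDerivAt_fst.const_mul m).add (hasFDerivAt_snd.const_mul n))

lemma pdS_comp_linear (hf : HasDerivAt f f' (m * x.1 + n * x.2)) :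
    pdS (fun y => f (m * y.1 + n * y.2)) x = m * f' := by
  simp [pdS, (hasFDerivAt_comp_linear hf).fderiv, mul_comm]

lemma pdT_comp_linear (hf : HasDerivAt f f' (m * x.1 + n * x.2)) :
    pdT (fun y => f (m * y.1 + n * y.2)) x = n * f' := by
  simp [pdT, (hasFDerivAt_comp_linear hf).fderiv, mul_comm]

end PartialDerivatives

section SinWave

variable (m n : ℝ)

lemma contDiff_sinWave : ContDiff ℝ (⊤ : ℕ∞) (sinWave m n) := by
  unfold sinWave
  fun_prop

lemma pdS_sinWave : pdS (sinWave m n) = fun x => m * cos (m * x.1 + n * x.2) :=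
  funext fun _ => pdS_comp_linear (hasDerivAt_sin _)

lemma pdT_sinWave : pdT (sinWave m n) = fun x => n * cos (m * x.1 + n * x.2) :=
  funext fun _ => pdT_comp_linear (hasDerivAt_sin _)

lemma pdS_pdS_sinWave (x : ℝ × ℝ) : pdS (pdS (sinWave m n)) x = -m ^ 2 * sinWave m n x := by
  rw [pdS_sinWave, pdS_comp_linear ((hasDerivAt_cos _).const_mul m), sinWave]
  ring

lemma pdT_pdT_sinWave (x : ℝ × ℝ) : pdT (pdT (sinWave m n)) x = -n ^ 2 * sinWave m n x := by
  rw [pdT_sinWave, pdT_comp_linear ((hasDerivAt_cos _).const_mul n), sinWave]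
  ring

lemma laplacian_sinWave (x : ℝ × ℝ) :
    pdS (pdS (sinWave m n)) x + pdT (pdT (sinWave m n)) x = -(m ^ 2 + n ^ 2) * sinWave m n x := by
  rw [pdS_pdS_sinWave, pdT_pdT_sinWave]
  ring

lemma tubeSecondVariation_integrand_sinWave (x : ℝ × ℝ) :
    (pdS (pdS (sinWave m n)) x + pdT (pdT (sinWave m n)) x) ^ 2
        - 2 * pdS (sinWave m n) x ^ 2 - 2 * pdT (sinWave m n) x ^ 2
      = (m ^ 2 + n ^ 2) * (m ^ 2 + n ^ 2 - 2) / 2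
        - (m ^ 2 + n ^ 2) * (m ^ 2 + n ^ 2 + 2) / 2 * cos (2 * (m * x.1 + n * x.2)) := by
  rw [laplacian_sinWave, pdS_sinWave, pdT_sinWave, sinWave, mul_pow, mul_pow, mul_pow,
    sin_sq_eq_half_sub, cos_sq]
  ring

end SinWave

section Periodicity

variable (m n : ℤ) (x : ℝ × ℝ)

lemma sinWave_add_two_pi_fst : sinWave m n (x.1 + 2 * π, x.2) = sinWave m n x := by
  simp only [sinWave, mul_add, add_right_comm _ _ ((n : ℝ) * x.2), sin_add_int_mul_two_pi]

lemma sinWave_add_two_pi_snd : sinWave m n (x.1, x.2 + 2 * π) = sinWave m n x := by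
  simp only [sinWave, mul_add, ← add_assoc, sin_add_int_mul_two_pi]

end Periodicity

lemma setIntegral_Icc_prod_Icc {E : Type*} [NormedAddCommGroup E] [NormedSpace ℝ E]
    {f : ℝ × ℝ → E} {a b c d : ℝ} (hab : a ≤ b) (hcd : c ≤ d)
    (hf : IntegrableOn f (Set.Icc a b ×ˢ Set.Icc c d)) :
    ∫ x in Set.Icc a b ×ˢ Set.Icc c d, f x = ∫ s in a..b, ∫ t in c..d, f (s, t) := by
  simp only [intervalIntegral.integral_of_le hab, intervalIntegral.integral_of_le hcd,
    ← integral_Icc_eq_integral_Ioc]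
  exact setIntegral_prod f hf

lemma integrableOn_periodSquare {E : Type*} [NormedAddCommGroup E] {f : ℝ × ℝ → E}
    (hf : Continuous f) : IntegrableOn f periodSquare :=
  hf.continuousOn.integrableOn_compact (isCompact_Icc.prod isCompact_Icc)

lemma volume_real_periodSquare : volume.real periodSquare = (2 * π) ^ 2 := by
  rw [Measure.volume_eq_prod, measureReal_prod_prod, volume_real_Icc_of_le two_pi_pos.le,
    sub_zero, sq]

lemma integral_cos_add_int_mul {k : ℤ} (hk : k ≠ 0) (c : ℝ) :
    ∫ s in (0 : ℝ)..2 * π, cos (c + k * s) = 0 := by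
  rw [intervalIntegral.integral_comp_add_mul cos (Int.cast_ne_zero.2 hk), integral_cos, mul_zero,
    add_zero, sin_add_int_mul_two_pi, sub_self, smul_zero]

lemma setIntegral_periodSquare_cos {k l : ℤ} (hkl : k ≠ 0 ∨ l ≠ 0) :
    ∫ x in periodSquare, cos (k * x.1 + l * x.2) = 0 := by
  rw [setIntegral_Icc_prod_Icc two_pi_pos.le two_pi_pos.le
    (integrableOn_periodSquare (by fun_prop))]
  rcases eq_or_ne l 0 with rfl | hl
  · have hk : ∫ s in (0 : ℝ)..2 * π, cos (k * s) = 0 := by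
      simpa only [zero_add] using integral_cos_add_int_mul (hkl.resolve_right (not_not_intro rfl)) 0
    simp [hk]
  · simp only [integral_cos_add_int_mul hl, intervalIntegral.integral_zero]

theorem tubeSecondVariation_sinWave (m n : ℤ) :
    tubeSecondVariation (sinWave m n)
      = 2 * π ^ 2 * ((m ^ 2 + n ^ 2) * (m ^ 2 + n ^ 2 - 2)) := by
  set Λ : ℝ := m ^ 2 + n ^ 2 with hΛ
  have oscillation_eq_zero :
      Λ * (Λ + 2) / 2 * ∫ x in periodSquare, cos (2 * (m * x.1 + n * x.2)) = 0 := by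
    by_cases hmn : m = 0 ∧ n = 0
    · simp [hΛ, hmn]
    · have h := setIntegral_periodSquare_cos (k := 2 * m) (l := 2 * n) (by lia)
      push_cast at h
      simp only [mul_add, ← mul_assoc, h, mul_zero]
  calc tubeSecondVariation (sinWave m n)
    _ = ∫ x in periodSquare,
          (Λ * (Λ - 2) / 2 - Λ * (Λ + 2) / 2 * cos (2 * (m * x.1 + n * x.2))) := by
      simp only [tubeSecondVariation, tubeSecondVariation_integrand_sinWave, hΛ]
    _ = (2 * π) ^ 2 * (Λ * (Λ - 2) / 2)
          - Λ * (Λ + 2) / 2 * ∫ x in periodSquare, cos (2 * (m * x.1 + n * x.2)) := by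
      rw [integral_sub (integrableOn_periodSquare continuous_const)
        (integrableOn_periodSquare (by fun_prop)), setIntegral_const, volume_real_periodSquare,
        smul_eq_mul, integral_const_mul]
    _ = 2 * π ^ 2 * (Λ * (Λ - 2)) := by
      rw [oscillation_eq_zero]
      ring

section Sign

variable {m n : ℤ}

lemma tubeSecondVariation_sinWave_pos (h : (2 : ℝ) < m ^ 2 + n ^ 2) :
    0 < tubeSecondVariation (sinWave m n) := by
  rw [tubeSecondVariation_sinWave]
  exact mul_pos (by positivity) (mul_pos (two_pos.trans h) (sub_pos.2 h))

lemma tubeSecondVariation_sinWave_neg (h₀ : (0 : ℝ) < m ^ 2 + n ^ 2)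
    (h₂ : (m ^ 2 + n ^ 2 : ℝ) < 2) : tubeSecondVariation (sinWave m n) < 0 := by
  rw [tubeSecondVariation_sinWave]
  exact mul_neg_of_pos_of_neg (by positivity) (mul_neg_of_pos_of_neg h₀ (sub_neg.2 h₂))

end Sign

/-- the functional
`G(u) = ∫_{[0,2π]²} ((∂ₛ∂ₛu + ∂ₜ∂ₜu)² − 2(∂ₛu)² − 2(∂ₜu)²)` is indefinite on smooth doubly
`2π`-periodic functions on `ℝ²` (H-instability of the normal congruence of a tube over a
closed geodesic of `S³`). -/
theorem tube_congruence_sphere_H_unstable :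
    ∃ u v : ℝ × ℝ → ℝ, ContDiff ℝ (⊤ : ℕ∞) u ∧ ContDiff ℝ (⊤ : ℕ∞) v ∧
      (∀ x : ℝ × ℝ, u (x.1 + 2 * π, x.2) = u x) ∧
      (∀ x : ℝ × ℝ, u (x.1, x.2 + 2 * π) = u x) ∧
      (∀ x : ℝ × ℝ, v (x.1 + 2 * π, x.2) = v x) ∧
      (∀ x : ℝ × ℝ, v (x.1, x.2 + 2 * π) = v x) ∧
      0 < (∫ x in Set.Icc (0 : ℝ) (2 * π) ×ˢ Set.Icc (0 : ℝ) (2 * π),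
            ((pdS (pdS u) x + pdT (pdT u) x) ^ 2 - 2 * (pdS u x) ^ 2 - 2 * (pdT u x) ^ 2)) ∧
      (∫ x in Set.Icc (0 : ℝ) (2 * π) ×ˢ Set.Icc (0 : ℝ) (2 * π),
            ((pdS (pdS v) x + pdT (pdT v) x) ^ 2 - 2 * (pdS v x) ^ 2 - 2 * (pdT v x) ^ 2)) < 0 := by
  have pos : 0 < tubeSecondVariation (sinWave (2 : ℤ) (0 : ℤ)) :=
    tubeSecondVariation_sinWave_pos (by norm_num)
  have neg : tubeSecondVariation (sinWave (1 : ℤ) (0 : ℤ)) < 0 :=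
    tubeSecondVariation_sinWave_neg (by norm_num) (by norm_num)
  exact ⟨sinWave (2 : ℤ) (0 : ℤ), sinWave (1 : ℤ) (0 : ℤ), contDiff_sinWave _ _,
    contDiff_sinWave _ _, sinWave_add_two_pi_fst _ _, sinWave_add_two_pi_snd _ _,
    sinWave_add_two_pi_fst _ _, sinWave_add_two_pi_snd _ _, pos, neg⟩
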